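/- The polynomial Q = x^30 - 13x^29 + 116x^28 - 899x^27 + 6003x^26 - 33002x^25 + 142158x^24 - 437871x^23 + 599981x^22 + 3161522x^21 - 30157709x^20 + 149069425x^19 - 545068137x^18 + 1602112888x^17 - 3929042061x^16 + 8240756348x^15 - 15020495335x^14 + 23992472995x^13 - 33394267804x^12 + 40034881756x^11 - 40888329774x^10 + 35730188833x^9 - 27316581262x^8 + 17713731976x^7 - 7068248851x^6 - 1463296732x^5 + 4054490087x^4 - 2555610007x^3 + 2573924261x^2 + 2363203645x - 261910751 is irreducible over the rational numbers ℚ. -/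

import Mathlib

open Polynomial

noncomputable def Q : Polynomial ℚ :=
  X^30 - 13*X^29 + 116*X^28 - 899*X^27 + 6003*X^26 - 33002*X^25 + 142158*X^24 - 437871*X^23 + 599981*X^22 + 3161522*X^21 - 30157709*X^20 + 149069425*X^19 - 545068137*X^18 + 1602112888*X^17 - 3929042061*X^16 + 8240756348*X^15 - 15020495335*X^14 + 23992472995*X^13 - 33394267804*X^12 + 40034881756*X^11 - 40888329774*X^10 + 35730188833*X^9 - 27316581262*X^8 + 17713731976*X^7 - 7068248851*X^6 - 1463296732*X^5 + 4054490087*X^4 - 2555610007*X^3 + 2573924261*X^2 + 2363203645*X - 261910751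

/-! `Q` is monic with integer coefficients, so it suffices that its reduction `f` modulo `2` is
irreducible, and for this we use Rabin's test. The degree `d` of an irreducible factor `g` of `f`
divides `30`, because `f ∣ X ^ 2 ^ 30 - X`. If `d ≠ 30`, then `d ∣ 30 / q` for a prime `q ∣ 30`, so
`g` divides `X ^ 2 ^ (30 / q) - X`, which is coprime to `f`. The two conditions on `f` are
computations in `𝔽₂[X] / (f)`, carried out on lists of coefficients. -/

section Rabin

variable {K : Type*} [Field K] [Finite K] {f : K[X]}

theorem irreducible_of_dvd_X_pow_card_pow_sub_X (hf : f.natDegree ≠ 0)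
    (hdvd : f ∣ X ^ Nat.card K ^ f.natDegree - X)
    (hcop : ∀ q ∈ f.natDegree.primeFactors,
      IsCoprime f (X ^ Nat.card K ^ (f.natDegree / q) - X)) :
    Irreducible f := by
  obtain ⟨g, hg, hgf⟩ := exists_irreducible_of_natDegree_pos (Nat.pos_of_ne_zero hf)
  have hd : g.natDegree ∣ f.natDegree :=
    hg.natDegree_dvd_of_dvd_X_pow_card_pow_sub_X (hgf.trans hdvd)
  suffices h : f.natDegree = g.natDegree from
    (associated_of_dvd_of_natDegree_le hgf (ne_zero_of_natDegree_gt (Nat.pos_of_ne_zero hf))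
      h.le).irreducible hg
  by_contra hne
  obtain ⟨m, hm⟩ := hd
  obtain ⟨q, hq, k, rfl⟩ := Nat.exists_prime_and_dvd (n := m) (by rintro rfl; simp [hm] at hne)
  have hdq : g.natDegree ∣ f.natDegree / q :=
    ⟨k, Nat.div_eq_of_eq_mul_right hq.pos (by rw [hm]; ring)⟩
  have hqf : q ∈ f.natDegree.primeFactors :=
    Nat.mem_primeFactors.2 ⟨hq, ⟨g.natDegree * k, by rw [hm]; ring⟩, hf⟩
  exact hg.not_isUnit <| (hcop q hqf).isUnit_of_dvd' hgf
    (hg.natDegree_dvd_iff_dvd_X_pow_card_pow_sub_X.1 hdq)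

end Rabin

section CoeffLists

variable {R S : Type*} [Semiring R] [Semiring S]

/-- The polynomial with a given list of coefficients, constant term first. Trailing zeros are
allowed, so a polynomial is represented by many lists. -/
noncomputable def ofCoeffs : List R → R[X]
  | [] => 0
  | a :: l => C a + X * ofCoeffs l

/-- The monic polynomial of degree `n` whose `n` non-leading coefficients form the list `t`. -/
noncomputable def monicOfCoeffs (t : List R) : R[X] :=
  X ^ t.length + ofCoeffs t

/-- Addition of polynomials on coefficient lists. -/
def addCoeffs : List R → List R → List R
  | [], m => m
  | l, [] => l
  | a :: l, b :: m => (a + b) :: addCoeffs l m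

/-- Multiplication of polynomials on coefficient lists. -/
def mulCoeffs : List R → List R → List R
  | [], _ => []
  | a :: l, m => addCoeffs (m.map (a * ·)) (0 :: mulCoeffs l m)

theorem ofCoeffs_map (φ : R →+* S) (l : List R) :
    ofCoeffs (l.map φ) = (ofCoeffs l).map φ := by
  induction l with
  | nil => simp [ofCoeffs]
  | cons a l ih => simp [ofCoeffs, ih]

theorem monicOfCoeffs_map (φ : R →+* S) (t : List R) :
    monicOfCoeffs (t.map φ) = (monicOfCoeffs t).map φ := by
  simp [monicOfCoeffs, ofCoeffs_map]

theorem degree_ofCoeffs_lt (l : List R) : (ofCoeffs l).degree < l.length := by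
  rw [degree_lt_iff_coeff_zero]
  induction l with
  | nil => simp [ofCoeffs]
  | cons a l ih =>
    rintro (_ | k) hk
    · simp at hk
    · simpa [ofCoeffs, coeff_C] using ih k (by simpa using hk)

theorem monic_monicOfCoeffs (t : List R) : (monicOfCoeffs t).Monic :=
  monic_X_pow_add (degree_ofCoeffs_lt t)

theorem natDegree_monicOfCoeffs [Nontrivial R] (t : List R) :
    (monicOfCoeffs t).natDegree = t.length := by
  have hlt : (ofCoeffs t).degree < (X ^ t.length : R[X]).degree := by
    simpa using degree_ofCoeffs_lt t
  rw [monicOfCoeffs, natDegree_add_eq_left_of_degree_lt hlt, natDegree_X_pow]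

theorem ofCoeffs_replicate_zero (n : ℕ) : ofCoeffs (List.replicate n (0 : R)) = 0 := by
  induction n with
  | zero => rfl
  | succ n ih => simp [List.replicate_succ, ofCoeffs, ih]

theorem ofCoeffs_map_neg {A : Type*} [Ring A] (l : List A) :
    ofCoeffs (l.map (-·)) = -ofCoeffs l := by
  induction l with
  | nil => simp [ofCoeffs]
  | cons a l ih => simp [ofCoeffs, ih, add_comm]

theorem ofCoeffs_map_mul_left (a : R) (l : List R) :
    ofCoeffs (l.map (a * ·)) = C a * ofCoeffs l := by
  induction l with
  | nil => simp [ofCoeffs]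
  | cons b l ih => simp only [List.map_cons, ofCoeffs, ih, C_mul, mul_add, ← mul_assoc, X_mul_C]

theorem ofCoeffs_take_add_X_pow_mul_drop (n : ℕ) (l : List R) :
    ofCoeffs (l.take n) + X ^ n * ofCoeffs (l.drop n) = ofCoeffs l := by
  induction n generalizing l with
  | zero => simp [ofCoeffs]
  | succ n ih =>
    cases l with
    | nil => simp [ofCoeffs]
    | cons a l =>
      simp only [List.take_succ_cons, List.drop_succ_cons, ofCoeffs, ← ih l, mul_add, pow_succ',
        mul_assoc, add_assoc]

theorem ofCoeffs_addCoeffs (l m : List R) :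
    ofCoeffs (addCoeffs l m) = ofCoeffs l + ofCoeffs m := by
  fun_induction addCoeffs l m with
  | case1 => simp [ofCoeffs]
  | case2 => simp [ofCoeffs]
  | case3 a l b m ih => simp only [ofCoeffs, ih, C_add, mul_add, add_add_add_comm]

theorem ofCoeffs_mulCoeffs (l m : List R) :
    ofCoeffs (mulCoeffs l m) = ofCoeffs l * ofCoeffs m := by
  induction l with
  | nil => simp [mulCoeffs, ofCoeffs]
  | cons a l ih =>
    simp only [mulCoeffs, ofCoeffs_addCoeffs, ofCoeffs_map_mul_left, ofCoeffs, ih, C_0, zero_add,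
      add_mul, mul_assoc]

end CoeffLists

section Remainders

variable {R : Type*} [CommRing R]

/-- Substitution of `-t` for `X ^ n` in the terms of degree at least `n`, where `n` is the length
of `t`; this preserves the class modulo `monicOfCoeffs t`. -/
def reduceCoeffs (t l : List R) : List R :=
  addCoeffs (l.take t.length) (mulCoeffs ((l.drop t.length).map (-·)) t)

/-- Remainder modulo `monicOfCoeffs t` by Horner's scheme. For nonempty `t` the result has exactly
the length of `t`, so that congruent polynomials have equal remainders as lists. -/
def modCoeffs (t l : List R) : List R :=
  l.foldr (fun a r ↦ reduceCoeffs t (a :: r)) (List.replicate t.length 0)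

/-- Multiplication modulo `monicOfCoeffs t` on coefficient lists. -/
def mulModCoeffs (t l m : List R) : List R :=
  modCoeffs t (mulCoeffs l m)

/-- The `n`-th power modulo `monicOfCoeffs t` on coefficient lists. -/
def powModCoeffs (t : List R) (n : ℕ) (l : List R) : List R :=
  (mulModCoeffs t l)^[n] [1]

/-- A representative of `X ^ q ^ k` modulo `monicOfCoeffs t`, obtained by `k` successive `q`-th
powers. -/
def xPowPowMod (t : List R) (q k : ℕ) : List R :=
  (powModCoeffs t q)^[k] [0, 1]

theorem mk_X_pow_length (t : List R) :
    AdjoinRoot.mk (monicOfCoeffs t) (X ^ t.length) =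
      -AdjoinRoot.mk (monicOfCoeffs t) (ofCoeffs t) := by
  rw [eq_neg_iff_add_eq_zero, ← map_add]
  exact AdjoinRoot.mk_self

theorem mk_reduceCoeffs (t l : List R) :
    AdjoinRoot.mk (monicOfCoeffs t) (ofCoeffs (reduceCoeffs t l)) =
      AdjoinRoot.mk (monicOfCoeffs t) (ofCoeffs l) := by
  rw [← ofCoeffs_take_add_X_pow_mul_drop t.length l]
  simp only [reduceCoeffs, ofCoeffs_addCoeffs, ofCoeffs_mulCoeffs, ofCoeffs_map_neg, map_add,
    map_mul, map_neg, mk_X_pow_length]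
  ring

theorem mk_modCoeffs (t l : List R) :
    AdjoinRoot.mk (monicOfCoeffs t) (ofCoeffs (modCoeffs t l)) =
      AdjoinRoot.mk (monicOfCoeffs t) (ofCoeffs l) := by
  induction l with
  | nil => simp [modCoeffs, ofCoeffs_replicate_zero, ofCoeffs]
  | cons a l ih =>
    simp only [modCoeffs, List.foldr_cons, mk_reduceCoeffs, ofCoeffs, map_add, map_mul] at ih ⊢
    rw [ih]

theorem mk_mulModCoeffs (t l m : List R) :
    AdjoinRoot.mk (monicOfCoeffs t) (ofCoeffs (mulModCoeffs t l m)) =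
      AdjoinRoot.mk (monicOfCoeffs t) (ofCoeffs l * ofCoeffs m) := by
  rw [mulModCoeffs, mk_modCoeffs, ofCoeffs_mulCoeffs]

theorem mk_powModCoeffs (t : List R) (n : ℕ) (l : List R) :
    AdjoinRoot.mk (monicOfCoeffs t) (ofCoeffs (powModCoeffs t n l)) =
      AdjoinRoot.mk (monicOfCoeffs t) (ofCoeffs l ^ n) := by
  induction n with
  | zero => simp [powModCoeffs, ofCoeffs]
  | succ n ih =>
    rw [powModCoeffs] at ih ⊢
    rw [Function.iterate_succ_apply', mk_mulModCoeffs, map_mul, ih, pow_succ', map_mul]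

theorem mk_xPowPowMod (t : List R) (q k : ℕ) :
    AdjoinRoot.mk (monicOfCoeffs t) (ofCoeffs (xPowPowMod t q k)) =
      AdjoinRoot.mk (monicOfCoeffs t) (X ^ q ^ k) := by
  induction k with
  | zero => simp [xPowPowMod, ofCoeffs]
  | succ k ih =>
    rw [xPowPowMod] at ih ⊢
    rw [Function.iterate_succ_apply', mk_powModCoeffs, map_pow, ih, ← map_pow, ← pow_mul, pow_succ]

theorem dvd_X_pow_pow_sub_X_of_xPowPowMod_eq {t : List R} {q k : ℕ}
    (h : xPowPowMod t q k = modCoeffs t [0, 1]) :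
    monicOfCoeffs t ∣ X ^ q ^ k - X := by
  rw [← AdjoinRoot.mk_eq_mk, ← mk_xPowPowMod, h, mk_modCoeffs]
  simp [ofCoeffs]

theorem isCoprime_X_pow_pow_sub_X_of_mulModCoeffs_eq {t c : List R} {q k : ℕ}
    (h : mulModCoeffs t c (addCoeffs (xPowPowMod t q k) [0, -1]) = modCoeffs t [1]) :
    IsCoprime (monicOfCoeffs t) (X ^ q ^ k - X) := by
  have hmk : AdjoinRoot.mk (monicOfCoeffs t) (ofCoeffs c * (X ^ q ^ k - X)) =
      AdjoinRoot.mk (monicOfCoeffs t) 1 := by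
    have hc := congrArg (fun l ↦ AdjoinRoot.mk (monicOfCoeffs t) (ofCoeffs l)) h
    simpa [mk_mulModCoeffs, mk_modCoeffs, ofCoeffs_addCoeffs, mk_xPowPowMod, ofCoeffs,
      ← sub_eq_add_neg] using hc
  obtain ⟨b, hb⟩ := AdjoinRoot.mk_eq_mk.1 hmk
  exact ⟨-b, ofCoeffs c, by linear_combination hb⟩

end Remainders

theorem irreducible_monicOfCoeffs {K : Type*} [Field K] [Finite K] {t : List K}
    (ht : t ≠ []) (hpow : xPowPowMod t (Nat.card K) t.length = modCoeffs t [0, 1])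
    (hinv : ∀ q ∈ t.length.primeFactors, ∃ c,
      mulModCoeffs t c (addCoeffs (xPowPowMod t (Nat.card K) (t.length / q)) [0, -1]) =
        modCoeffs t [1]) :
    Irreducible (monicOfCoeffs t) := by
  refine irreducible_of_dvd_X_pow_card_pow_sub_X ?_ ?_ ?_ <;> rw [natDegree_monicOfCoeffs]
  · exact List.length_eq_zero_iff.not.2 ht
  · exact dvd_X_pow_pow_sub_X_of_xPowPowMod_eq hpow
  · intro q hq
    obtain ⟨c, hc⟩ := hinv q hq
    exact isCoprime_X_pow_pow_sub_X_of_mulModCoeffs_eq hc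

/-- The non-leading coefficients of `Q`, constant term first. -/
def coeffsQ : List ℤ :=
  [-261910751, 2363203645, 2573924261, -2555610007, 4054490087, -1463296732, -7068248851,
   17713731976, -27316581262, 35730188833, -40888329774, 40034881756, -33394267804, 23992472995,
   -15020495335, 8240756348, -3929042061, 1602112888, -545068137, 149069425, -30157709, 3161522,
   599981, -437871, 142158, -33002, 6003, -899, 116, -13]

/-- The non-leading coefficients of the reduction of `Q` modulo `2`, constant term first. -/
def coeffsQModTwo : List (ZMod 2) :=
  coeffsQ.map (Int.castRingHom (ZMod 2))

/-- Bézout cofactors certifying `IsCoprime f (X ^ 2 ^ (30 / q) - X)`, where `f` is the reduction of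
`Q` modulo `2` and `q` is a prime factor of `30`: the inverse of `X ^ 2 ^ (30 / q) - X` modulo `f`,
found by the extended Euclidean algorithm. -/
def cofactor : ℕ → List (ZMod 2)
  | 2 =>
    [0, 0, 0, 0, 1, 0, 1, 0, 1, 0, 0, 1, 1, 1, 0, 0, 1, 1, 0, 0, 0, 0, 1, 0, 1, 0, 1, 1, 1]
  | 3 =>
    [0, 0, 1, 1, 1, 1, 0, 0, 1, 1, 1, 1, 0, 1, 1, 0, 1, 1, 0, 0, 1, 0, 1, 0, 0, 1, 0, 1, 1, 1]
  | _ =>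
    [0, 1, 1, 1, 0, 1, 0, 0, 1, 1, 1, 0, 1, 1, 0, 0, 0, 1, 0, 1, 0, 1, 1, 1, 1, 1, 0, 0, 1, 1]

theorem monicOfCoeffs_coeffsQ_map : (monicOfCoeffs coeffsQ).map (algebraMap ℤ ℚ) = Q := by
  simp only [algebraMap_int_eq, monicOfCoeffs, coeffsQ, ofCoeffs, Q, List.length_cons,
    List.length_nil, zero_add, add_zero, mul_zero, mul_neg, Nat.reduceAdd, Int.reduceNeg,
    eq_intCast, Int.cast_neg, Int.cast_ofNat, Polynomial.map_add, Polynomial.map_mul,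
    Polynomial.map_neg, Polynomial.map_pow, Polynomial.map_ofNat, map_X]
  ring

theorem xPowPowMod_coeffsQModTwo :
    xPowPowMod coeffsQModTwo 2 30 = modCoeffs coeffsQModTwo [0, 1] := by
  decide +kernel

theorem mulModCoeffs_cofactor : ∀ q ∈ Nat.primeFactors 30,
    mulModCoeffs coeffsQModTwo (cofactor q)
        (addCoeffs (xPowPowMod coeffsQModTwo 2 (30 / q)) [0, -1]) =
      modCoeffs coeffsQModTwo [1] := by
  decide +kernel

theorem irreducible_monicOfCoeffs_coeffsQModTwo : Irreducible (monicOfCoeffs coeffsQModTwo) := by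
  have hlen : coeffsQModTwo.length = 30 := rfl
  refine irreducible_monicOfCoeffs (by decide) ?_ ?_ <;> rw [Nat.card_zmod, hlen]
  · exact xPowPowMod_coeffsQModTwo
  · exact fun q hq ↦ ⟨cofactor q, mulModCoeffs_cofactor q hq⟩

theorem irreducible_Q : Irreducible Q := by
  have hmonic := monic_monicOfCoeffs coeffsQ
  have hmod : Irreducible ((monicOfCoeffs coeffsQ).map (Int.castRingHom (ZMod 2))) := by
    rw [← monicOfCoeffs_map]
    exact irreducible_monicOfCoeffs_coeffsQModTwo
  have hint : Irreducible (monicOfCoeffs coeffsQ) :=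
    hmonic.irreducible_of_irreducible_map _ _ hmod
  rw [← monicOfCoeffs_coeffsQ_map]
  exact hmonic.irreducible_iff_irreducible_map_fraction_map.1 hint
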